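/- Let n ≥ 7 with n ≠ 10, and let A be an n×n 0-1 matrix with finite stable index. Then θ(A) = g(n) if and only if A is permutation similar to a block matrix of the form [[C_p, X],[0, C_q]], where X is a p×q 0-1 matrix with exactly one nonzero entry and (p,q) satisfies condition (★) for n (in either order). -/

import Mathlib

/-- A matrix over ℕ is a 0-1 matrix iff all its entries are at most 1. -/
def IsZO {α β : Type*} (A : Matrix α β ℕ) : Prop := ∀ i j, A i j ≤ 1

/-- The stable index of a 0-1 matrix: the smallest positive `k` with `A ^ (k+1)`
not a 0-1 matrix, or `⊤` if no such `k` exists. -/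
noncomputable def theta {α : Type*} [Fintype α] [DecidableEq α]
    (A : Matrix α α ℕ) : ℕ∞ :=
  sInf ((fun k : ℕ => (k : ℕ∞)) '' {k : ℕ | 1 ≤ k ∧ ¬ IsZO (A ^ (k + 1))})

/-- `g(n)` from the paper. -/
def g (n : ℕ) : ℕ :=
  if n % 2 = 1 then (n ^ 2 - 1) / 4
  else if n % 4 = 0 then (n ^ 2 - 4) / 4
  else (n ^ 2 - 16) / 4

/-- Basic circulant 0-1 matrix of order `n`. -/
def Cmat (n : ℕ) : Matrix (Fin n) (Fin n) ℕ :=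
  Matrix.of fun i j => if (j : ℕ) = ((i : ℕ) + 1) % n then 1 else 0

/-- Condition (★) on `(n, p, q)`. -/
def StarCond (n p q : ℕ) : Prop :=
  p + q = n ∧
  ((n % 2 = 1 ∧ ({p, q} : Finset ℕ) = {(n + 1) / 2, (n - 1) / 2}) ∨
   (n % 4 = 0 ∧ ({p, q} : Finset ℕ) = {(n + 2) / 2, (n - 2) / 2}) ∨
   (n % 4 = 2 ∧ ({p, q} : Finset ℕ) = {(n + 4) / 2, (n - 4) / 2}))

/-!
Read `A` as a digraph. Then `θ(A)` is the least `k` for which there is a *fork* of length `k`: two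
walks with `k + 1` steps that share their start and end but separate at the first step. If `θ(A)` is
`g n > n`, there are no forks of length at most `n`, and this makes the cycles pairwise disjoint.

If no cycle reaches a different one, both walks of a fork of length `g n` run into a cycle, of
lengths `p` and `q` say, and dropping `lcm p q` steps from each yields a shorter fork.
Otherwise a shortest walk from a cycle of length `p` to a different cycle of length `q`, with
`l + 1` steps, gives a fork of length `lcm p q + l`, because going around the first cycle before
the walk takes as long as going around the second one after it. Since `p + q + l ≤ n`, the bound
`g n ≤ lcm p q + l` forces `l = 0` and the condition (★), so the two cycles cover all vertices and
are joined by an edge. A second edge would, by the Chinese remainder theorem, give a fork of length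
less than `p * q = g n`.
-/

open Function Relation

section Digraph

variable {V : Type*} {E : V → V → Prop} {a b c d x y z : V} {i j k l : ℕ}

/-- There is a walk with `k` steps from `x` to `y` in the digraph with edge relation `E`. -/
def Walk (E : V → V → Prop) : ℕ → V → V → Prop
  | 0, x, y => x = y
  | k + 1, x, y => ∃ z, E x z ∧ Walk E k z y

namespace Walk

theorem single (h : E x y) : Walk E 1 x y := ⟨y, h, rfl⟩

theorem trans (hi : Walk E i x y) (hj : Walk E j y z) : Walk E (i + j) x z := by
  induction i generalizing x with
  | zero => cases hi; rwa [zero_add]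
  | succ i ih =>
    obtain ⟨u, hu, hw⟩ := hi
    rw [Nat.succ_add]
    exact ⟨u, hu, ih hw⟩

theorem map {W : Type*} {F : W → W → Prop} {f : V → W} (hf : ∀ x y, E x y → F (f x) (f y))
    (h : Walk E k x y) : Walk F k (f x) (f y) := by
  induction k generalizing x with
  | zero => exact congrArg f h
  | succ k ih =>
    obtain ⟨u, hu, hw⟩ := h
    exact ⟨f u, hf x u hu, ih hw⟩

theorem reflTransGen (h : Walk E k x y) : ReflTransGen E x y := by
  induction k generalizing x with
  | zero => cases h; rfl
  | succ k ih =>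
    obtain ⟨u, hu, hw⟩ := h
    exact (ih hw).head hu

theorem transGen (hk : 0 < k) (h : Walk E k x y) : TransGen E x y := by
  obtain ⟨k, rfl⟩ := Nat.exists_eq_succ_of_ne_zero hk.ne'
  obtain ⟨u, hu, hw⟩ := h
  exact TransGen.head' hu hw.reflTransGen

theorem restrict {P : V → Prop} (h : Walk E k x y)
    (hP : ∀ u, ReflTransGen E x u → ReflTransGen E u y → P u) :
    Walk (fun u v => E u v ∧ P v) k x y := by
  induction k generalizing x with
  | zero => exact h
  | succ k ih =>
    obtain ⟨u, hu, hw⟩ := h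
    exact ⟨u, ⟨hu, hP u (.single hu) hw.reflTransGen⟩, ih hw fun v huv => hP v (huv.head hu)⟩

theorem exists_loop_or_finset (h : Walk E k x y) :
    (∃ z i l j, Walk E i x z ∧ 0 < l ∧ Walk E l z z ∧ Walk E j z y ∧ i + l + j = k) ∨
      ∃ s : Finset V, s.card = k + 1 ∧
        ∀ u ∈ s, ∃ i j, Walk E i x u ∧ Walk E j u y ∧ i + j = k := by
  classical
  induction k generalizing x with
  | zero =>
    cases h
    exact .inr ⟨{y}, rfl, fun u hu => ⟨0, 0, (Finset.mem_singleton.mp hu).symm,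
      Finset.mem_singleton.mp hu, rfl⟩⟩
  | succ k ih =>
    obtain ⟨v, hv, hw⟩ := h
    have cons {i : ℕ} {u : V} (hi : Walk E i v u) : Walk E (i + 1) x u := ⟨v, hv, hi⟩
    obtain ⟨z, i, l, j, hi, hl, hloop, hj, hsum⟩ | ⟨s, hcard, hs⟩ := ih hw
    · exact .inl ⟨z, i + 1, l, j, cons hi, hl, hloop, hj, by omega⟩
    by_cases hx : x ∈ s
    · obtain ⟨i, j, hi, hj, hsum⟩ := hs x hx
      exact .inl ⟨x, 0, i + 1, j, rfl, i.succ_pos, cons hi, hj, by omega⟩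
    · refine .inr ⟨insert x s, by rw [Finset.card_insert_of_notMem hx, hcard], fun u hu => ?_⟩
      obtain rfl | hu := Finset.mem_insert.mp hu
      · exact ⟨0, k + 1, rfl, cons hw, by omega⟩
      · obtain ⟨i, j, hi, hj, hsum⟩ := hs u hu
        exact ⟨i + 1, j, cons hi, hj, by omega⟩

theorem exists_finset_of_isLeast (h : IsLeast {m | Walk E m x y} k) :
    ∃ s : Finset V, s.card = k + 1 ∧
      ∀ u ∈ s, ∃ i j, Walk E i x u ∧ Walk E j u y ∧ i + j = k := by
  obtain ⟨z, i, l, j, hi, hl, -, hj, hsum⟩ | hs := h.1.exists_loop_or_finset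
  · have : k ≤ i + j := h.2 (hi.trans hj)
    omega
  · exact hs

theorem exists_loop_of_card_le (h : Walk E k x y) (s : Finset V) (hcard : s.card ≤ k)
    (hs : ∀ u, ReflTransGen E x u → u ∈ s) :
    ∃ z i l j, Walk E i x z ∧ 0 < l ∧ Walk E l z z ∧ Walk E j z y ∧ i + l + j = k := by
  obtain hloop | ⟨t, htcard, ht⟩ := h.exists_loop_or_finset
  · exact hloop
  · have hts : t ⊆ s := fun u hu =>
      have ⟨_, _, hi, _⟩ := ht u hu
      hs u hi.reflTransGen
    have := Finset.card_le_card hts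
    omega

end Walk

theorem exists_walk_of_reflTransGen (h : ReflTransGen E x y) : ∃ k, Walk E k x y := by
  induction h using ReflTransGen.head_induction_on with
  | refl => exact ⟨0, rfl⟩
  | head hu _ ih =>
    obtain ⟨k, hk⟩ := ih
    exact ⟨k + 1, _, hu, hk⟩

/-- Two walks with `k + 1` steps from a common start to a common end that separate at the first
step. -/
def Fork (E : V → V → Prop) (k : ℕ) : Prop :=
  ∃ x y z w, y ≠ z ∧ E x y ∧ E x z ∧ Walk E k y w ∧ Walk E k z w

theorem not_fork_zero : ¬ Fork E 0 := by
  rintro ⟨x, y, z, w, hyz, -, -, rfl, rfl⟩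
  exact hyz rfl

/-- `x` lies on a closed walk of positive length. -/
def Recurrent (E : V → V → Prop) (x : V) : Prop := TransGen E x x

/-- Distinct cycles share no vertex, stated locally: at most one edge out of each vertex lies on
a closed walk. -/
def DisjointCycles (E : V → V → Prop) : Prop :=
  ∀ x y z, E x y → E x z → ReflTransGen E y x → ReflTransGen E z x → y = z

/-- `x` and `y` lie in the same strong component. -/
abbrev SameComponent (E : V → V → Prop) : V → V → Prop := AntisymmRel (ReflTransGen E)

open Classical in
/-- A successor of `x` on a closed walk through `x`; the junk value is `x` itself. -/
noncomputable def cycleNext (E : V → V → Prop) (x : V) : V :=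
  if h : ∃ y, E x y ∧ ReflTransGen E y x then h.choose else x

/-- If cycles are disjoint, the length of the cycle through the recurrent vertex `x`. -/
noncomputable def cycleLength (E : V → V → Prop) (x : V) : ℕ := minimalPeriod (cycleNext E) x

namespace Recurrent

theorem cycleNext_spec (h : Recurrent E x) :
    E x (cycleNext E x) ∧ ReflTransGen E (cycleNext E x) x := by
  have hx : ∃ y, E x y ∧ ReflTransGen E y x := TransGen.head'_iff.mp h
  rw [cycleNext, dif_pos hx]
  exact hx.choose_spec

theorem sameComponent_cycleNext (h : Recurrent E x) : SameComponent E x (cycleNext E x) :=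
  ⟨.single h.cycleNext_spec.1, h.cycleNext_spec.2⟩

theorem of_sameComponent (h : Recurrent E x) (hxy : SameComponent E x y) : Recurrent E y :=
  (TransGen.trans_right hxy.2 h).trans_left hxy.1

theorem next (h : Recurrent E x) : Recurrent E (cycleNext E x) :=
  h.of_sameComponent h.sameComponent_cycleNext

theorem walk_iterate (h : Recurrent E x) (k : ℕ) : Walk E k x ((cycleNext E)^[k] x) := by
  induction k generalizing x with
  | zero => rfl
  | succ k ih => exact ⟨_, h.cycleNext_spec.1, ih h.next⟩

theorem sameComponent_iterate (h : Recurrent E x) (k : ℕ) :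
    SameComponent E x ((cycleNext E)^[k] x) := by
  induction k generalizing x with
  | zero => exact AntisymmRel.rfl
  | succ k ih => exact h.sameComponent_cycleNext.trans (ih h.next)

theorem iterate (h : Recurrent E x) (k : ℕ) : Recurrent E ((cycleNext E)^[k] x) :=
  h.of_sameComponent (h.sameComponent_iterate k)

theorem walk_iterate_add (h : Recurrent E x) (i k : ℕ) :
    Walk E k ((cycleNext E)^[i] x) ((cycleNext E)^[i + k] x) := by
  rw [add_comm, iterate_add_apply]
  exact (h.iterate i).walk_iterate k

theorem walk_of_dvd (h : Recurrent E x) (hk : cycleLength E x ∣ k) : Walk E k x x := by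
  have := h.walk_iterate k
  rwa [(isPeriodicPt_iff_minimalPeriod_dvd.mpr hk).eq] at this

end Recurrent

namespace DisjointCycles

theorem cycleNext_eq (hE : DisjointCycles E) (hxy : E x y) (hyx : ReflTransGen E y x) :
    cycleNext E x = y :=
  have hx : Recurrent E x := TransGen.head' hxy hyx
  hE x _ _ hx.cycleNext_spec.1 hxy hx.cycleNext_spec.2 hyx

theorem iterate_eq_of_walk (hE : DisjointCycles E) (h : Walk E k x y) (hyx : ReflTransGen E y x) :
    (cycleNext E)^[k] x = y := by
  induction k generalizing x with
  | zero => exact h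
  | succ k ih =>
    obtain ⟨u, hu, hw⟩ := h
    rw [iterate_succ_apply, hE.cycleNext_eq hu (hw.reflTransGen.trans hyx)]
    exact ih hw (hyx.tail hu)

theorem cycleLength_dvd_of_walk (hE : DisjointCycles E) (h : Walk E k x x) : cycleLength E x ∣ k :=
  isPeriodicPt_iff_minimalPeriod_dvd.mp (hE.iterate_eq_of_walk h .refl)

theorem mem_periodicPts (hE : DisjointCycles E) (h : Recurrent E x) :
    x ∈ periodicPts (cycleNext E) := by
  obtain ⟨y, hxy, hyx⟩ := TransGen.head'_iff.mp h
  obtain ⟨k, hk⟩ := exists_walk_of_reflTransGen hyx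
  exact ⟨k + 1, k.succ_pos, hE.iterate_eq_of_walk (k := k + 1) ⟨y, hxy, hk⟩ .refl⟩

theorem cycleLength_pos (hE : DisjointCycles E) (h : Recurrent E x) : 0 < cycleLength E x :=
  minimalPeriod_pos_of_mem_periodicPts (hE.mem_periodicPts h)

theorem cycleLength_eq (hE : DisjointCycles E) (h : Recurrent E x) (hxy : SameComponent E x y) :
    cycleLength E y = cycleLength E x := by
  obtain ⟨k, hk⟩ := exists_walk_of_reflTransGen hxy.1
  rw [← hE.iterate_eq_of_walk hk hxy.2]
  exact minimalPeriod_apply_iterate (hE.mem_periodicPts h) k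

theorem edge_iterate_iff (hE : DisjointCycles E) (h : Recurrent E a) (hj : j < cycleLength E a) :
    E ((cycleNext E)^[i] a) ((cycleNext E)^[j] a) ↔ j = (i + 1) % cycleLength E a := by
  have hmod : (cycleNext E)^[(i + 1) % cycleLength E a] a = (cycleNext E)^[i + 1] a :=
    iterate_mod_minimalPeriod_eq
  constructor
  · intro hij
    have hji : ReflTransGen E ((cycleNext E)^[j] a) ((cycleNext E)^[i] a) :=
      (h.sameComponent_iterate j).2.trans (h.sameComponent_iterate i).1
    have hnext := hE.cycleNext_eq hij hji
    rw [← iterate_succ_apply' (cycleNext E), ← hmod] at hnext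
    exact (iterate_injOn_Iio_minimalPeriod (Nat.mod_lt _ (Nat.zero_lt_of_lt hj)) hj hnext).symm
  · rintro rfl
    rw [hmod, iterate_succ_apply']
    exact (h.iterate i).cycleNext_spec.1

end DisjointCycles

section Finite

variable [Fintype V]

open Classical in
/-- The vertex set of the strong component of `x`. -/
noncomputable def component (E : V → V → Prop) (x : V) : Finset V := {y | SameComponent E x y}

theorem mem_component : y ∈ component E x ↔ SameComponent E x y := by simp [component]

theorem disjoint_component (h : ¬ ReflTransGen E x y) :
    Disjoint (component E x) (component E y) := by
  simp only [Finset.disjoint_left, mem_component]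
  exact fun z hxz hyz => h (hxz.1.trans hyz.2)

theorem Recurrent.cycleLength_le_card (h : Recurrent E x) :
    cycleLength E x ≤ (component E x).card := by
  rw [← Finset.card_range (cycleLength E x)]
  refine Finset.card_le_card_of_injOn (fun k => (cycleNext E)^[k] x)
    (fun k _ => mem_component.mpr (h.sameComponent_iterate k)) ?_
  rw [Finset.coe_range]
  exact iterate_injOn_Iio_minimalPeriod

theorem exists_fork_le_card (hyz : y ≠ z) (hxy : E x y) (hxz : E x z)
    (hyx : ReflTransGen E y x) (hzx : ReflTransGen E z x) : ∃ k ≤ Fintype.card V, Fork E k := by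
  classical
  obtain ⟨b, hb⟩ : ∃ b, IsLeast {m | Walk E m y x} b :=
    ⟨_, isLeast_csInf (exists_walk_of_reflTransGen hyx)⟩
  obtain ⟨C, hCcard, hC⟩ := Walk.exists_finset_of_isLeast hb
  obtain ⟨l, ⟨t, htC, hzt⟩, hl⟩ : ∃ l, IsLeast {m | ∃ t ∈ C, Walk E m z t} l := by
    obtain ⟨u, hu⟩ : C.Nonempty := Finset.card_pos.mp (by omega)
    obtain ⟨_, _, hyu, -⟩ := hC u hu
    obtain ⟨m, hm⟩ := exists_walk_of_reflTransGen ((hzx.tail hxy).trans hyu.reflTransGen)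
    exact ⟨_, isLeast_csInf ⟨m, u, hu, hm⟩⟩
  obtain ⟨P, hPcard, hP⟩ :=
    Walk.exists_finset_of_isLeast (E := E) (x := z) (y := t) ⟨hzt, fun m hm => hl ⟨t, htC, hm⟩⟩
  have hdisj : Disjoint C (P.erase t) := by
    refine Finset.disjoint_left.mpr fun u huC huP => ?_
    obtain ⟨i, j, hi, hj, hij⟩ := hP u (Finset.mem_of_mem_erase huP)
    obtain rfl : j = 0 := by have : l ≤ i := hl ⟨u, huC, hi⟩; omega
    exact Finset.ne_of_mem_erase huP hj
  have hcard : b + 1 + l ≤ Fintype.card V := by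
    have := Finset.card_le_univ (C ∪ P.erase t)
    rw [Finset.card_union_of_disjoint hdisj] at this
    have := P.pred_card_le_card_erase (a := t)
    omega
  obtain ⟨i, j, hyt, htx, hij⟩ := hC t htC
  refine ⟨b + 1 + l, hcard, x, y, z, t, hyz, hxy, hxz, ?_, ?_⟩
  · exact (hb.1.trans (.single hxz)).trans hzt
  · have := ((hzt.trans htx).trans (.single hxy)).trans hyt
    rwa [show l + j + 1 + i = b + 1 + l by omega] at this

theorem disjointCycles_of_forall_not_fork (h : ∀ k ≤ Fintype.card V, ¬ Fork E k) :
    DisjointCycles E := by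
  intro x y z hxy hxz hyx hzx
  by_contra hyz
  obtain ⟨k, hk, hfork⟩ := exists_fork_le_card hyz hxy hxz hyx hzx
  exact h k hk hfork

end Finite

/-- A walk with `k` steps that leads from a cycle through `a` to a different cycle through `b`,
with no way back. -/
structure CycleLink (E : V → V → Prop) (k : ℕ) (a b : V) : Prop where
  recurrent_left : Recurrent E a
  recurrent_right : Recurrent E b
  walk : Walk E k a b
  not_reflTransGen : ¬ ReflTransGen E b a

namespace CycleLink

theorem pos (h : CycleLink E k a b) : 0 < k := by
  refine Nat.pos_of_ne_zero ?_
  rintro rfl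
  obtain rfl : a = b := h.walk
  exact h.not_reflTransGen .refl

theorem left_of_sameComponent (h : CycleLink E k a b) (hw : Walk E l y b)
    (hay : SameComponent E a y) : CycleLink E l y b :=
  ⟨h.recurrent_left.of_sameComponent hay, h.recurrent_right, hw,
    fun hby => h.not_reflTransGen (hby.trans hay.2)⟩

theorem not_recurrent (h : CycleLink E k a b)
    (hmin : ∀ m a' b', CycleLink E m a' b' → k ≤ m) (hi : Walk E i a x) (hj : Walk E j x b)
    (hk : i + j = k) (hxa : x ≠ a) (hxb : x ≠ b) : ¬ Recurrent E x := by
  intro hx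
  by_cases hback : ReflTransGen E x a
  · have := hmin j x b (h.left_of_sameComponent hj ⟨hi.reflTransGen, hback⟩)
    obtain rfl : i = 0 := by omega
    exact hxa hi.symm
  · have := hmin i a x ⟨h.recurrent_left, hx, hi, hback⟩
    obtain rfl : j = 0 := by omega
    exact hxb hj

theorem card_le [Fintype V] (h : CycleLink E (l + 1) a b)
    (hmin : ∀ m a' b', CycleLink E m a' b' → l + 1 ≤ m) :
    cycleLength E a + cycleLength E b + l ≤ Fintype.card V := by
  classical
  obtain ⟨P, hPcard, hP⟩ := Walk.exists_finset_of_isLeast (E := E) (x := a) (y := b)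
    ⟨h.walk, fun m hm => hmin m a b ⟨h.recurrent_left, h.recurrent_right, hm, h.not_reflTransGen⟩⟩
  have hab : ¬ ReflTransGen E b a := h.not_reflTransGen
  have hdisj : Disjoint (component E b ∪ component E a) ((P.erase a).erase b) := by
    refine Finset.disjoint_right.mpr fun u hu => ?_
    simp only [Finset.mem_erase] at hu
    obtain ⟨i, j, hi, hj, hij⟩ := hP u hu.2.2
    have hnot := h.not_recurrent hmin hi hj hij hu.2.1 hu.1
    simp only [Finset.mem_union, mem_component]
    rintro (hbu | hau)
    · exact hnot (h.recurrent_right.of_sameComponent hbu)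
    · exact hnot (h.recurrent_left.of_sameComponent hau)
  have hcard := Finset.card_le_univ ((component E b ∪ component E a) ∪ (P.erase a).erase b)
  rw [Finset.card_union_of_disjoint hdisj,
    Finset.card_union_of_disjoint (disjoint_component hab)] at hcard
  have := P.pred_card_le_card_erase (a := a)
  have := (P.erase a).pred_card_le_card_erase (a := b)
  have := h.recurrent_left.cycleLength_le_card
  have := h.recurrent_right.cycleLength_le_card
  omega

theorem fork (hE : DisjointCycles E) (h : CycleLink E (l + 1) a b)
    (hmin : ∀ m a' b', CycleLink E m a' b' → l + 1 ≤ m) :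
    Fork E ((cycleLength E a).lcm (cycleLength E b) + l) := by
  obtain ⟨v, hav, hvb⟩ := h.walk
  have ha := h.recurrent_left
  obtain ⟨M, hM⟩ : ∃ M, (cycleLength E a).lcm (cycleLength E b) = M + 1 :=
    Nat.exists_eq_add_one.mpr
      (Nat.lcm_pos (hE.cycleLength_pos ha) (hE.cycleLength_pos h.recurrent_right))
  have hne : cycleNext E a ≠ v := by
    rintro rfl
    have := hmin l _ b (h.left_of_sameComponent hvb ha.sameComponent_cycleNext)
    omega
  refine ⟨a, cycleNext E a, v, b, hne, ha.cycleNext_spec.1, hav, ?_, ?_⟩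
  · have hcycle : Walk E M (cycleNext E a) a := by
      have hwalk := ha.next.walk_iterate M
      have hper : IsPeriodicPt (cycleNext E) (M + 1) a :=
        isPeriodicPt_iff_minimalPeriod_dvd.mpr (hM ▸ Nat.dvd_lcm_left _ _)
      rwa [← iterate_succ_apply, hper.eq] at hwalk
    have := hcycle.trans h.walk
    rwa [hM, add_right_comm]
  · have := hvb.trans (h.recurrent_right.walk_of_dvd (Nat.dvd_lcm_right (cycleLength E a) _))
    rwa [add_comm] at this

end CycleLink

/-- No cycle reaches a different one. -/
def CyclesSeparated (E : V → V → Prop) : Prop :=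
  ∀ x y, Recurrent E x → Recurrent E y → ReflTransGen E x y → ReflTransGen E y x

theorem exists_shortest_cycleLink (h : ¬ CyclesSeparated E) :
    ∃ k a b, CycleLink E (k + 1) a b ∧ ∀ m a' b', CycleLink E m a' b' → k + 1 ≤ m := by
  simp only [CyclesSeparated, not_forall] at h
  obtain ⟨a, b, ha, hb, hab, hba⟩ := h
  obtain ⟨k, hk⟩ := exists_walk_of_reflTransGen hab
  obtain ⟨m, ⟨a', b', hlink⟩, hmin⟩ : ∃ m, IsLeast {m | ∃ a b, CycleLink E m a b} m :=
    ⟨_, isLeast_csInf ⟨k, a, b, ha, hb, hk, hba⟩⟩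
  obtain ⟨k, rfl⟩ := Nat.exists_eq_add_one.mpr hlink.pos
  exact ⟨k, a', b', hlink, fun m a b h => hmin ⟨a, b, h⟩⟩

theorem CyclesSeparated.sameComponent (hsep : CyclesSeparated E) (hx : Recurrent E x)
    (hy : Recurrent E y) (h : ReflTransGen E x y ∨ ReflTransGen E y x) : SameComponent E x y :=
  h.elim (fun hxy => ⟨hxy, hsep x y hx hy hxy⟩) fun hyx => ⟨hsep y x hy hx hyx, hyx⟩

/-- There is a walk with `k` steps from `x` to `y` that meets the strong component of `c`. -/
def WalkThrough (E : V → V → Prop) (c : V) (k : ℕ) (x y : V) : Prop :=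
  ∃ z i j, SameComponent E c z ∧ Walk E i x z ∧ Walk E j z y ∧ i + j = k

theorem DisjointCycles.walkThrough_of_loop (hE : DisjointCycles E) (hi : Walk E i x c)
    (hl : 0 < l) (hloop : Walk E l c c) (hj : Walk E j c y) :
    ∃ k, k + cycleLength E c = i + l + j ∧ WalkThrough E c k x y := by
  have hc : Recurrent E c := hloop.transGen hl
  have hdvd := hE.cycleLength_dvd_of_walk hloop
  have hle := Nat.le_of_dvd hl hdvd
  exact ⟨i + (l - cycleLength E c) + j, by omega, c, _, j, AntisymmRel.rfl,
    hi.trans (hc.walk_of_dvd (Nat.dvd_sub hdvd dvd_rfl)), hj, rfl⟩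

namespace WalkThrough

theorem walk (h : WalkThrough E c k x y) : Walk E k x y := by
  obtain ⟨z, i, j, -, hi, hj, rfl⟩ := h
  exact hi.trans hj

theorem reflTransGen (h : WalkThrough E c k x y) : ReflTransGen E x c := by
  obtain ⟨z, i, j, hz, hi, -, -⟩ := h
  exact hi.reflTransGen.trans hz.2

theorem congr (hcd : SameComponent E c d) (h : WalkThrough E c k x y) :
    WalkThrough E d k x y := by
  obtain ⟨z, i, j, hz, h⟩ := h
  exact ⟨z, i, j, hcd.symm.trans hz, h⟩

theorem add_cycleLength (h : WalkThrough E c k x y) (hE : DisjointCycles E) (hc : Recurrent E c) :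
    WalkThrough E c (k + cycleLength E c) x y := by
  obtain ⟨z, i, j, hz, hi, hj, rfl⟩ := h
  have hloop : Walk E (cycleLength E c) z z :=
    (hc.of_sameComponent hz).walk_of_dvd (hE.cycleLength_eq hc hz).dvd
  exact ⟨z, i + cycleLength E c, j, hz, hi.trans hloop, hj, by omega⟩

end WalkThrough

section Finite

variable [Fintype V]

theorem DisjointCycles.exists_walkThrough (hE : DisjointCycles E) (h : Walk E k x y)
    (hk : Fintype.card V ≤ k) :
    ∃ c l, Recurrent E c ∧ l + cycleLength E c = k ∧ WalkThrough E c l x y := by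
  obtain ⟨c, i, l, j, hi, hl, hloop, hj, hsum⟩ :=
    h.exists_loop_of_card_le Finset.univ hk fun u _ => Finset.mem_univ u
  obtain ⟨m, hm, hthrough⟩ := hE.walkThrough_of_loop hi hl hloop hj
  exact ⟨c, m, hloop.transGen hl, hm.trans hsum, hthrough⟩

namespace WalkThrough

-- Every vertex of the walk is comparable with `c`, so the walk avoids the component of `d` and is
-- long enough to repeat a vertex; the resulting loop lies in the component of `c`.
theorem of_add_cycleLength (h : WalkThrough E c (k + cycleLength E c) x y)
    (hE : DisjointCycles E) (hsep : CyclesSeparated E) (hc : Recurrent E c) (hd : Recurrent E d)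
    (hcd : ¬ ReflTransGen E c d)
    (hk : Fintype.card V ≤ k + cycleLength E c + cycleLength E d) : WalkThrough E c k x y := by
  classical
  obtain ⟨z, i, j, hz, hi, hj, hij⟩ := h
  let P (u : V) : Prop := ReflTransGen E u c ∨ ReflTransGen E c u
  let F (u v : V) : Prop := E u v ∧ P v
  have hFE {u v : V} {m : ℕ} (hw : Walk F m u v) : Walk E m u v := hw.map (f := id) fun _ _ h => h.1
  have hF : Walk F (i + j) x y :=
    (hi.restrict fun u _ huz => .inl (huz.trans hz.2)).trans
      (hj.restrict fun u hzu _ => .inr (hz.1.trans hzu))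
  have hP (u : V) (hxu : ReflTransGen F x u) : P u := by
    obtain rfl | ⟨v, -, hvu⟩ := hxu.cases_tail
    · exact .inl (hi.reflTransGen.trans hz.2)
    · exact hvu.2
  have hcomp (u : V) (hxu : ReflTransGen F x u) (hu : Recurrent E u) : SameComponent E c u :=
    hsep.sameComponent hc hu (hP u hxu).symm
  have hcard : (component E d)ᶜ.card ≤ i + j := by
    have := hd.cycleLength_le_card
    have := (component E d).card_add_card_compl
    omega
  obtain ⟨u, i', l, j', hi', hl, hloop, hj', hsum⟩ :=
    hF.exists_loop_of_card_le (component E d)ᶜ hcard fun u hxu => by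
      rw [Finset.mem_compl, mem_component]
      exact fun hdu => hcd ((hcomp u hxu (hd.of_sameComponent hdu)).1.trans hdu.2)
  have hcu : SameComponent E c u := hcomp u hi'.reflTransGen ((hFE hloop).transGen hl)
  obtain ⟨m, hm, hthrough⟩ := hE.walkThrough_of_loop (hFE hi') hl (hFE hloop) (hFE hj')
  rw [hE.cycleLength_eq hc hcu] at hm
  obtain rfl : m = k := by omega
  exact hthrough.congr hcu.symm

theorem of_add_mul_cycleLength {m : ℕ} (h : WalkThrough E c (k + m * cycleLength E c) x y)
    (hE : DisjointCycles E) (hsep : CyclesSeparated E) (hc : Recurrent E c) (hd : Recurrent E d)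
    (hcd : ¬ ReflTransGen E c d)
    (hk : Fintype.card V ≤ k + cycleLength E c + cycleLength E d) : WalkThrough E c k x y := by
  induction m with
  | zero => simpa using h
  | succ m ih =>
    rw [Nat.succ_mul, ← add_assoc] at h
    exact ih (h.of_add_cycleLength hE hsep hc hd hcd (by omega))

end WalkThrough

theorem cycleLength_add_lt_card (hc : Recurrent E c) (hd : Recurrent E d)
    (hcd : ¬ ReflTransGen E c d) (hdc : ¬ ReflTransGen E d c) (hxc : ReflTransGen E x c)
    (hxd : ReflTransGen E x d) : cycleLength E c + cycleLength E d < Fintype.card V := by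
  classical
  have hx : x ∉ component E c ∪ component E d := by
    rw [Finset.mem_union, mem_component, mem_component]
    rintro (h | h)
    · exact hcd (h.1.trans hxd)
    · exact hdc (h.1.trans hxc)
  have hcard := Finset.card_le_univ (insert x (component E c ∪ component E d))
  rw [Finset.card_insert_of_notMem hx, Finset.card_union_of_disjoint (disjoint_component hcd)]
    at hcard
  have := hc.cycleLength_le_card
  have := hd.cycleLength_le_card
  omega

theorem CyclesSeparated.exists_fork_lt (hsep : CyclesSeparated E) (hE : DisjointCycles E)
    (hfork : Fork E k) (hk : Fintype.card V ≤ k)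
    (hlcm : ∀ p q r, 0 < p → 0 < q → 0 < r → p + q + r = Fintype.card V → p.lcm q + r ≤ k) :
    ∃ j < k, Fork E j := by
  obtain ⟨x, y, z, w, hyz, hxy, hxz, hyw, hzw⟩ := hfork
  obtain ⟨c, i, hc, hi, hyw⟩ := hE.exists_walkThrough hyw hk
  obtain ⟨d, j, hd, hj, hzw⟩ := hE.exists_walkThrough hzw hk
  have hp := hE.cycleLength_pos hc
  have hq := hE.cycleLength_pos hd
  by_cases hcd : ReflTransGen E c d
  · have hlen := hE.cycleLength_eq hc (hsep.sameComponent hc hd (.inl hcd))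
    obtain rfl : i = j := by omega
    exact ⟨i, by omega, x, y, z, w, hyz, hxy, hxz, hyw.walk, hzw.walk⟩
  have hdc : ¬ ReflTransGen E d c := fun hdc => hcd (hsep d c hd hc hdc)
  have hcard := cycleLength_add_lt_card hc hd hcd hdc (hyw.reflTransGen.head hxy)
    (hzw.reflTransGen.head hxz)
  have hle := hlcm _ _ (Fintype.card V - (cycleLength E c + cycleLength E d)) hp hq
    (by omega) (by omega)
  have hpos := Nat.lcm_pos hp hq
  obtain ⟨m, hm⟩ := Nat.dvd_lcm_left (cycleLength E c) (cycleLength E d)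
  obtain ⟨n, hn⟩ := Nat.dvd_lcm_right (cycleLength E c) (cycleLength E d)
  rw [mul_comm] at hm hn
  obtain ⟨l, hl⟩ := Nat.exists_eq_add_of_le (show (cycleLength E c).lcm (cycleLength E d) ≤ k by
    omega)
  have hy := hyw.add_cycleLength hE hc
  have hz := hzw.add_cycleLength hE hd
  rw [show i + cycleLength E c = l + m * cycleLength E c by omega] at hy
  rw [show j + cycleLength E d = l + n * cycleLength E d by omega] at hz
  exact ⟨l, by omega, x, y, z, w, hyz, hxy, hxz,
    (hy.of_add_mul_cycleLength hE hsep hc hd hcd (by omega)).walk,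
    (hz.of_add_mul_cycleLength hE hsep hd hc hdc (by omega)).walk⟩

end Finite

theorem exists_fork_of_two_edges (ha : Recurrent E a) (hb : Recurrent E b)
    (hba : ¬ ReflTransGen E b a) (hab : E a b)
    (hcop : (cycleLength E a).Coprime (cycleLength E b))
    (hedge : E ((cycleNext E)^[i] a) ((cycleNext E)^[j] b)) (hi : i < cycleLength E a)
    (hj : j < cycleLength E b) (hij : i ≠ 0 ∨ j ≠ 0) :
    ∃ k < cycleLength E a * cycleLength E b, Fork E k := by
  let k := Nat.chineseRemainder hcop (cycleLength E a - i) (cycleLength E b - j)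
  have hka : cycleLength E a ∣ i + k := by
    have := k.2.1.add_left i
    rw [Nat.add_sub_cancel' hi.le] at this
    exact Nat.modEq_zero_iff_dvd.mp (this.trans (by simp [Nat.ModEq]))
  have hkb : cycleLength E b ∣ j + k := by
    have := k.2.2.add_left j
    rw [Nat.add_sub_cancel' hj.le] at this
    exact Nat.modEq_zero_iff_dvd.mp (this.trans (by simp [Nat.ModEq]))
  obtain ⟨m, hm⟩ : ∃ m, (k : ℕ) = m + 1 := by
    refine Nat.exists_eq_add_one_of_ne_zero fun hk => ?_
    rw [hk, add_zero] at hka hkb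
    exact hij.elim (· (Nat.eq_zero_of_dvd_of_lt hka hi)) (· (Nat.eq_zero_of_dvd_of_lt hkb hj))
  have hlt : (k : ℕ) < cycleLength E a * cycleLength E b :=
    Nat.chineseRemainder_lt_mul hcop _ _ (Nat.ne_zero_of_lt hi) (Nat.ne_zero_of_lt hj)
  rw [hm] at hka hkb hlt
  have hwb := hb.walk_iterate_add j (m + 1)
  have hwa := ha.walk_iterate_add (i + 1) m
  rw [(isPeriodicPt_iff_minimalPeriod_dvd.mpr hkb).eq] at hwb
  rw [add_right_comm, add_assoc, (isPeriodicPt_iff_minimalPeriod_dvd.mpr hka).eq] at hwa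
  refine ⟨m + 1, hlt, _, _, (cycleNext E)^[i + 1] a, b, ?_, hedge, ?_, hwb, hwa.trans (.single hab)⟩
  · intro heq
    have hreach := (hb.sameComponent_iterate j).1
    rw [heq] at hreach
    exact hba (hreach.trans (ha.sameComponent_iterate _).2)
  · rw [iterate_succ_apply']
    exact (ha.iterate i).cycleNext_spec.1

theorem exists_equiv_of_cycleLength_add_eq_card [Fintype V] (ha : Recurrent E a)
    (hb : Recurrent E b) (hba : ¬ ReflTransGen E b a)
    (hcard : cycleLength E a + cycleLength E b = Fintype.card V) :
    ∃ e : Fin (cycleLength E a) ⊕ Fin (cycleLength E b) ≃ V,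
      (∀ i, e (.inl i) = (cycleNext E)^[i] a) ∧ ∀ j, e (.inr j) = (cycleNext E)^[j] b := by
  let f : Fin (cycleLength E a) ⊕ Fin (cycleLength E b) → V :=
    Sum.elim (fun i => (cycleNext E)^[i] a) fun j => (cycleNext E)^[j] b
  have hf : Injective f := by
    refine Injective.sumElim ?_ ?_ ?_
    · exact fun i i' h => Fin.ext (iterate_injOn_Iio_minimalPeriod i.2 i'.2 h)
    · exact fun j j' h => Fin.ext (iterate_injOn_Iio_minimalPeriod j.2 j'.2 h)
    · intro i j h
      have hbj := (hb.sameComponent_iterate j).1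
      rw [← h] at hbj
      exact hba (hbj.trans (ha.sameComponent_iterate i).2)
  have hbij : Bijective f := (Fintype.bijective_iff_injective_and_card f).mpr ⟨hf, by simpa⟩
  exact ⟨.ofBijective f hbij, fun _ => rfl, fun _ => rfl⟩

end Digraph

section StableIndex

variable {α : Type*} {A : Matrix α α ℕ} {k : ℕ}

/-- The edge relation of the digraph whose adjacency matrix is `A`. -/
def Arc {α : Type*} (A : Matrix α α ℕ) (x y : α) : Prop := A x y ≠ 0

variable [Fintype α] [DecidableEq α]

theorem pow_apply_ne_zero_iff (A : Matrix α α ℕ) (k : ℕ) (x y : α) :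
    (A ^ k) x y ≠ 0 ↔ Walk (Arc A) k x y := by
  induction k generalizing x with
  | zero => simp [Walk, Matrix.one_apply]
  | succ k ih =>
    simp only [pow_succ', Matrix.mul_apply, ne_eq, Finset.sum_eq_zero_iff, Finset.mem_univ,
      true_implies, not_forall, mul_eq_zero, not_or, Walk, ← ih, Arc]

theorem Fork.not_isZO_pow (h : Fork (Arc A) k) : ¬ IsZO (A ^ (k + 1)) := by
  obtain ⟨x, y, z, w, hyz, hxy, hxz, hyw, hzw⟩ := h
  rw [← pow_apply_ne_zero_iff] at hyw hzw
  intro hA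
  have hpair : A x y * (A ^ k) y w + A x z * (A ^ k) z w ≤ (A ^ (k + 1)) x w := by
    rw [pow_succ', Matrix.mul_apply,
      ← Finset.sum_pair (f := fun i => A x i * (A ^ k) i w) hyz]
    exact Finset.sum_le_sum_of_subset (Finset.subset_univ _)
  have hy : 0 < A x y * (A ^ k) y w := Nat.pos_of_ne_zero (mul_ne_zero hxy hyw)
  have hz : 0 < A x z * (A ^ k) z w := Nat.pos_of_ne_zero (mul_ne_zero hxz hzw)
  have := hA x w
  omega

theorem fork_of_not_isZO_pow_succ (hA : IsZO A) (hk : IsZO (A ^ k)) (h : ¬ IsZO (A ^ (k + 1))) :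
    Fork (Arc A) k := by
  simp only [IsZO, not_forall, not_le] at h
  obtain ⟨x, w, hxw⟩ := h
  rw [pow_succ', Matrix.mul_apply] at hxw
  have hle (i : α) : A x i * (A ^ k) i w ≤ 1 := Nat.mul_le_mul (hA x i) (hk i w)
  have hcard : 1 < ({i | A x i * (A ^ k) i w ≠ 0} : Finset α).card := by
    refine hxw.trans_le ?_
    rw [← Finset.sum_filter_ne_zero]
    simpa using Finset.sum_le_card_nsmul _ _ 1 fun i _ => hle i
  obtain ⟨y, hy, z, hz, hyz⟩ := Finset.one_lt_card.mp hcard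
  simp only [Finset.mem_filter, Finset.mem_univ, true_and, mul_ne_zero_iff,
    pow_apply_ne_zero_iff] at hy hz
  exact ⟨x, y, z, w, hyz, hy.1, hz.1, hy.2, hz.2⟩

theorem exists_fork_of_not_isZO_pow (hA : IsZO A) (h : ¬ IsZO (A ^ k)) :
    ∃ j < k, Fork (Arc A) j := by
  induction k with
  | zero => exact absurd (fun i j => by rw [pow_zero, Matrix.one_apply]; split_ifs <;> simp) h
  | succ k ih =>
    by_cases hk : IsZO (A ^ k)
    · exact ⟨k, k.lt_succ_self, fork_of_not_isZO_pow_succ hA hk h⟩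
    · obtain ⟨j, hj, hfork⟩ := ih hk
      exact ⟨j, hj.trans k.lt_succ_self, hfork⟩

theorem theta_eq_iInf_fork (hA : IsZO A) : theta A = ⨅ (k : ℕ) (_ : Fork (Arc A) k), (k : ℕ∞) := by
  rw [theta, sInf_image]
  refine le_antisymm (le_iInf₂ fun k hk => ?_) (le_iInf₂ fun k hk => ?_)
  · have hpos : 1 ≤ k := Nat.one_le_iff_ne_zero.mpr fun h => not_fork_zero (h ▸ hk)
    exact iInf₂_le k ⟨hpos, hk.not_isZO_pow⟩
  · obtain ⟨j, hj, hfork⟩ := exists_fork_of_not_isZO_pow hA hk.2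
    exact (iInf₂_le j hfork).trans (Nat.cast_le.mpr (Nat.le_of_lt_succ hj))

theorem theta_eq_iff_isLeast_fork (hA : IsZO A) :
    theta A = k ↔ IsLeast {j | Fork (Arc A) j} k := by
  rw [theta_eq_iInf_fork hA, iInf_subtype', ENat.iInf_eq_natCast_iff]
  simp [IsLeast, mem_lowerBounds]

theorem theta_reindex {β : Type*} [Fintype β] [DecidableEq β] (e : α ≃ β) (A : Matrix α α ℕ) :
    theta (Matrix.reindex e e A) = theta A := by
  have hpow (k : ℕ) : Matrix.reindex e e A ^ k = Matrix.reindex e e (A ^ k) :=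
    (map_pow (Matrix.reindexAlgEquiv ℕ ℕ e) A k).symm
  have hZO (B : Matrix α α ℕ) : IsZO (Matrix.reindex e e B) ↔ IsZO B :=
    ⟨fun h i j => by simpa using h (e i) (e j), fun h i j => h _ _⟩
  simp only [theta, hpow, hZO]

end StableIndex

section Arithmetic

variable {n p q r l : ℕ}

theorem four_mul_g (hn : 4 ≤ n) :
    (n % 2 = 1 ∧ 4 * g n + 1 = n ^ 2) ∨ (n % 4 = 0 ∧ 4 * g n + 4 = n ^ 2) ∨
      (n % 4 = 2 ∧ 4 * g n + 16 = n ^ 2) := by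
  have hsq : 4 * n ≤ n ^ 2 := by nlinarith
  have hmod : n ^ 2 % 4 = (n % 4) ^ 2 % 4 := Nat.pow_mod n 2 4
  obtain h | h | h | h : n % 4 = 0 ∨ n % 4 = 1 ∨ n % 4 = 2 ∨ n % 4 = 3 := by omega
  all_goals
    rw [h] at hmod
    unfold g
    split_ifs <;> omega

theorem lt_g (hn : 7 ≤ n) : n < g n := by
  obtain ⟨-, h⟩ | ⟨hmod, h⟩ | ⟨hmod, h⟩ := four_mul_g (show 4 ≤ n by omega)
  · nlinarith
  · nlinarith [show 8 ≤ n by omega]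
  · nlinarith [show 10 ≤ n by omega]

theorem lcm_add_lt_g (hn : 7 ≤ n) (hn10 : n ≠ 10) (hp : 0 < p) (hq : 0 < q) (hr : 0 < r)
    (hsum : p + q + r = n) : p.lcm q + r < g n := by
  have hlcm := Nat.lcm_le_mul hp hq
  have hmul : 4 * (p * q) ≤ (p + q) ^ 2 := by simpa only [mul_assoc] using four_mul_le_sq_add p q
  have hsq : (p + q) ^ 2 + 4 * r + 2 * n ≤ n ^ 2 + 5 := by
    obtain ⟨s, rfl⟩ := Nat.exists_eq_add_one.mpr hr
    obtain ⟨t, ht⟩ : ∃ t, p + q = t + 2 := ⟨p + q - 2, by omega⟩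
    rw [← hsum, ht]
    nlinarith [Nat.zero_le (s * t), sq_nonneg s]
  have := four_mul_g (show 4 ≤ n by omega)
  omega

theorem StarCond.symm (h : StarCond n p q) : StarCond n q p := by
  rwa [StarCond, add_comm, Finset.pair_comm]

theorem starCond_add_iff {d : ℕ} :
    StarCond n p (p + d) ↔ 2 * p + d = n ∧ (d = 1 ∨ Odd p ∧ (d = 2 ∨ d = 4)) := by
  simp only [StarCond, ← Finset.coe_inj, Finset.coe_pair, Set.pair_eq_pair_iff, Nat.odd_iff]
  omega

theorem StarCond.mul_eq (h : StarCond n p q) : p * q = g n := by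
  wlog hle : p ≤ q generalizing p q
  · rw [mul_comm]
    exact this h.symm (Nat.le_of_not_le hle)
  obtain ⟨d, rfl⟩ := Nat.exists_eq_add_of_le hle
  obtain ⟨rfl, hd⟩ := starCond_add_iff.mp h
  have hsq : (2 * p + d) ^ 2 = 4 * (p * (p + d)) + d ^ 2 := by ring
  obtain rfl | ⟨hp, rfl | rfl⟩ := hd <;> unfold g <;> split_ifs <;> grind

theorem StarCond.coprime (h : StarCond n p q) : p.Coprime q := by
  wlog hle : p ≤ q generalizing p q
  · exact (this h.symm (Nat.le_of_not_le hle)).symm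
  obtain ⟨d, rfl⟩ := Nat.exists_eq_add_of_le hle
  rw [Nat.coprime_self_add_right]
  obtain ⟨-, rfl | ⟨hp, rfl | rfl⟩⟩ := starCond_add_iff.mp h
  · exact Nat.coprime_one_right p
  · exact hp.coprime_two_right
  · exact hp.coprime_two_right.pow_right 2

theorem coprime_of_g_le_lcm (hsum : 7 ≤ p + q) (hg : g (p + q) ≤ p.lcm q) : p.Coprime q := by
  by_contra hcop
  have hgcd : 2 ≤ p.gcd q := by
    have : p.gcd q ≠ 0 := by rw [ne_eq, Nat.gcd_eq_zero_iff]; omega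
    have : p.gcd q ≠ 1 := hcop
    omega
  have hlcm : 2 * g (p + q) ≤ p * q := p.gcd_mul_lcm q ▸ Nat.mul_le_mul hgcd hg
  have hmul : 4 * (p * q) ≤ (p + q) ^ 2 := by simpa only [mul_assoc] using four_mul_le_sq_add p q
  have hsq : 7 ^ 2 ≤ (p + q) ^ 2 := Nat.pow_le_pow_left hsum 2
  have := four_mul_g (show 4 ≤ p + q by omega)
  omega

theorem starCond_of_coprime_of_g_le_mul (hsum : 7 ≤ p + q) (hcop : p.Coprime q)
    (hg : g (p + q) ≤ p * q) : StarCond (p + q) p q := by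
  wlog hle : p ≤ q generalizing p q
  · rw [add_comm]
    exact (this (by rwa [add_comm]) hcop.symm (by rwa [add_comm, mul_comm])
      (Nat.le_of_not_le hle)).symm
  obtain ⟨d, rfl⟩ := Nat.exists_eq_add_of_le hle
  rw [Nat.coprime_self_add_right] at hcop
  have hd : (p + (p + d)) ^ 2 = 4 * (p * (p + d)) + d ^ 2 := by ring
  have hg := four_mul_g (show 4 ≤ p + (p + d) by omega)
  have hd4 : d ≤ 4 := by
    by_contra! h
    have : 5 ^ 2 ≤ d ^ 2 := Nat.pow_le_pow_left h 2
    omega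
  rw [starCond_add_iff, Nat.odd_iff]
  refine ⟨by omega, ?_⟩
  have hp0 : d = 0 → p = 1 := by rintro rfl; simpa using hcop
  have hp2 : ¬ (2 ∣ p ∧ 2 ∣ d) := fun h => Nat.not_coprime_of_dvd_of_dvd one_lt_two h.1 h.2 hcop
  interval_cases d <;> omega

theorem starCond_of_g_le (hn : 7 ≤ n) (hn10 : n ≠ 10) (hp : 0 < p) (hq : 0 < q)
    (hsum : p + q + l ≤ n) (hg : g n ≤ p.lcm q + l) : l = 0 ∧ StarCond n p q := by
  obtain ⟨r, hr⟩ := Nat.exists_eq_add_of_le hsum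
  obtain hlr | hlr := Nat.eq_zero_or_pos (l + r)
  · obtain ⟨rfl, rfl⟩ := Nat.add_eq_zero_iff.mp hlr
    subst hr
    exact ⟨rfl, starCond_of_coprime_of_g_le_mul hn (coprime_of_g_le_lcm hn hg)
      (hg.trans (Nat.lcm_le_mul hp hq))⟩
  · have := lcm_add_lt_g hn hn10 hp hq hlr (by omega)
    omega

end Arithmetic

section BlockTriangular

variable {ι κ : Type*} {A : Matrix ι ι ℕ} {X : Matrix ι κ ℕ} {D : Matrix κ κ ℕ} {k : ℕ}

open Matrix

theorem walk_fromBlocks_inr_iff {j : κ} {w : ι ⊕ κ} :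
    Walk (Arc (fromBlocks A X 0 D)) k (.inr j) w ↔ ∃ j', w = .inr j' ∧ Walk (Arc D) k j j' := by
  constructor
  · intro h
    induction k generalizing j with
    | zero => exact ⟨j, h.symm, rfl⟩
    | succ k ih =>
      obtain ⟨u | u, hu, hw⟩ := h
      · exact absurd rfl hu
      · obtain ⟨j', rfl, hj'⟩ := ih hw
        exact ⟨j', rfl, u, hu, hj'⟩
  · rintro ⟨j', rfl, h⟩
    exact h.map fun _ _ hD => hD

theorem walk_fromBlocks_inl_inr_iff {i : ι} {j : κ} :
    Walk (Arc (fromBlocks A X 0 D)) k (.inl i) (.inr j) ↔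
      ∃ s t x y, s + 1 + t = k ∧ Walk (Arc A) s i x ∧ X x y ≠ 0 ∧ Walk (Arc D) t y j := by
  constructor
  · intro h
    induction k generalizing i with
    | zero => exact absurd h Sum.inl_ne_inr
    | succ k ih =>
      obtain ⟨u | u, hu, hw⟩ := h
      · obtain ⟨s, t, x, y, hst, hs, hX, ht⟩ := ih hw
        exact ⟨s + 1, t, x, y, by omega, ⟨u, hu, hs⟩, hX, ht⟩
      · obtain ⟨j', hj, ht⟩ := walk_fromBlocks_inr_iff.mp hw
        obtain rfl := Sum.inr_injective hj
        exact ⟨0, k, i, u, by omega, rfl, hu, ht⟩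
  · rintro ⟨s, t, x, y, rfl, hs, hX, ht⟩
    have hA : Walk (Arc (fromBlocks A X 0 D)) s (.inl i) (.inl x) := hs.map fun _ _ hA => hA
    have hD : Walk (Arc (fromBlocks A X 0 D)) t (.inr y) (.inr j) := ht.map fun _ _ hD => hD
    have hXxy : Arc (fromBlocks A X 0 D) (.inl x) (.inr y) := hX
    exact (hA.trans (.single hXxy)).trans hD

end BlockTriangular

section Circulant

open Matrix

variable {p q k : ℕ} {X : Matrix (Fin p) (Fin q) ℕ}

theorem arc_Cmat_iff {i j : Fin p} : Arc (Cmat p) i j ↔ (j : ℕ) = (i + 1) % p := by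
  simp [Arc, Cmat]

theorem walk_arc_Cmat_iff {i j : Fin p} : Walk (Arc (Cmat p)) k i j ↔ j ≡ i + k [MOD p] := by
  induction k generalizing i with
  | zero => exact ⟨fun h => h ▸ rfl, fun h => Fin.ext (h.symm.eq_of_lt_of_lt i.2 j.2)⟩
  | succ k ih =>
    have hp : 0 < p := i.pos
    have hnext : (i + 1) % p + k ≡ i + (k + 1) [MOD p] := by
      rw [add_comm k, ← add_assoc]
      exact (Nat.mod_modEq _ _).add_right k
    constructor
    · rintro ⟨u, hu, hw⟩
      rw [ih, arc_Cmat_iff.mp hu] at hw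
      exact hw.trans hnext
    · intro h
      exact ⟨⟨(i + 1) % p, Nat.mod_lt _ hp⟩, arc_Cmat_iff.mpr rfl, ih.mpr (h.trans hnext.symm)⟩

theorem walk_arc_Cmat_self_iff {i : Fin p} : Walk (Arc (Cmat p)) k i i ↔ p ∣ k := by
  rw [walk_arc_Cmat_iff, Nat.left_modEq_add_iff]

theorem arc_Cmat_right_unique {i j j' : Fin p} (h : Arc (Cmat p) i j) (h' : Arc (Cmat p) i j') :
    j = j' :=
  Fin.ext ((arc_Cmat_iff.mp h).trans (arc_Cmat_iff.mp h').symm)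

theorem fork_fromBlocks_Cmat {x : Fin p} {y : Fin q} (hX : X x y ≠ 0) :
    Fork (Arc (fromBlocks (Cmat p) X 0 (Cmat q))) (p * q) := by
  obtain ⟨m, hm⟩ := Nat.exists_eq_add_one.mpr (Nat.mul_pos x.pos y.pos)
  obtain ⟨u, hxu, hux⟩ : Walk (Arc (Cmat p)) (m + 1) x x :=
    walk_arc_Cmat_self_iff.mpr (hm ▸ dvd_mul_right p q)
  have hy : Walk (Arc (Cmat q)) (p * q) y y := walk_arc_Cmat_self_iff.mpr (dvd_mul_left q p)
  exact ⟨.inl x, .inl u, .inr y, .inr y, Sum.inl_ne_inr, hxu, hX,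
    walk_fromBlocks_inl_inr_iff.mpr ⟨m, 0, x, y, hm.symm, hux, hX, rfl⟩,
    walk_fromBlocks_inr_iff.mpr ⟨y, rfl, hy⟩⟩

theorem mul_le_of_walk_fromBlocks_Cmat (hpq : p.Coprime q) {x u : Fin p} {y : Fin q}
    {w : Fin p ⊕ Fin q} (hX : ∀ i j, X i j ≠ 0 → i = x ∧ j = y) (hu : Arc (Cmat p) x u)
    (huw : Walk (Arc (fromBlocks (Cmat p) X 0 (Cmat q))) k (.inl u) w)
    (hyw : Walk (Arc (fromBlocks (Cmat p) X 0 (Cmat q))) k (.inr y) w) : p * q ≤ k := by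
  obtain ⟨j, rfl, hyj⟩ := walk_fromBlocks_inr_iff.mp hyw
  obtain ⟨s, t, x', y', rfl, hs, hxy', ht⟩ := walk_fromBlocks_inl_inr_iff.mp huw
  obtain ⟨rfl, rfl⟩ := hX x' y' hxy'
  have hp : p ∣ s + 1 := walk_arc_Cmat_self_iff.mp ⟨u, hu, hs⟩
  have hq : q ∣ s + 1 := by
    have hmod := (walk_arc_Cmat_iff.mp hyj).symm.trans (walk_arc_Cmat_iff.mp ht)
    rw [add_comm (s + 1), ← add_assoc] at hmod
    exact Nat.add_modEq_left_iff.mp hmod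
  have := Nat.le_of_dvd s.succ_pos (hpq.mul_dvd_of_dvd_of_dvd hp hq)
  omega

theorem mul_le_of_fork_fromBlocks_Cmat (hpq : p.Coprime q) {x : Fin p} {y : Fin q}
    (hX : ∀ i j, X i j ≠ 0 → i = x ∧ j = y)
    (h : Fork (Arc (fromBlocks (Cmat p) X 0 (Cmat q))) k) : p * q ≤ k := by
  obtain ⟨i | i, u | u, v | v, w, huv, hu, hv, huw, hvw⟩ := h
  · exact absurd (congrArg Sum.inl (arc_Cmat_right_unique hu hv)) huv
  · obtain ⟨rfl, rfl⟩ := hX i v hv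
    exact mul_le_of_walk_fromBlocks_Cmat hpq hX hu huw hvw
  · obtain ⟨rfl, rfl⟩ := hX i u hu
    exact mul_le_of_walk_fromBlocks_Cmat hpq hX hv hvw huw
  · exact absurd (congrArg Sum.inr ((hX i u hu).2.trans (hX i v hv).2.symm)) huv
  · exact absurd rfl hu
  · exact absurd rfl hu
  · exact absurd rfl hv
  · exact absurd (congrArg Sum.inr (arc_Cmat_right_unique hu hv)) huv

theorem isLeast_fork_fromBlocks_Cmat (hpq : p.Coprime q)
    (hX : ∃! ij : Fin p × Fin q, X ij.1 ij.2 ≠ 0) :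
    IsLeast {k | Fork (Arc (fromBlocks (Cmat p) X 0 (Cmat q))) k} (p * q) := by
  obtain ⟨⟨x, y⟩, hxy, huniq⟩ := hX
  exact ⟨fork_fromBlocks_Cmat hxy, fun k hk => mul_le_of_fork_fromBlocks_Cmat hpq
    (fun i j hij => Prod.ext_iff.mp (huniq (i, j) hij)) hk⟩

variable {α : Type*} {A : Matrix α α ℕ}

theorem apply_iterate_cycleNext_eq_Cmat {c : α} (hA : IsZO A) (hE : DisjointCycles (Arc A))
    (hc : Recurrent (Arc A) c) (i j : Fin (cycleLength (Arc A) c)) :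
    A ((cycleNext (Arc A))^[i] c) ((cycleNext (Arc A))^[j] c) = Cmat _ i j := by
  have hiff := hE.edge_iterate_iff (i := i) hc j.2
  rw [Cmat, Matrix.of_apply]
  split_ifs with h
  · exact le_antisymm (hA _ _) (Nat.one_le_iff_ne_zero.mpr (hiff.mpr h))
  · exact not_not.mp (mt hiff.mp h)

theorem reindex_fromBlocks_Cmat_eq {a b : α} (hA : IsZO A) (hE : DisjointCycles (Arc A))
    (ha : Recurrent (Arc A) a) (hb : Recurrent (Arc A) b) (hba : ¬ ReflTransGen (Arc A) b a)
    (e : Fin (cycleLength (Arc A) a) ⊕ Fin (cycleLength (Arc A) b) ≃ α)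
    (hea : ∀ i, e (.inl i) = (cycleNext (Arc A))^[i] a)
    (heb : ∀ j, e (.inr j) = (cycleNext (Arc A))^[j] b) :
    reindex e e (fromBlocks (Cmat _) (of fun i j => A (e (.inl i)) (e (.inr j))) 0 (Cmat _)) =
      A := by
  rw [← Equiv.eq_symm_apply, reindex_symm]
  ext (i | i) (j | j)
  · simp [hea, apply_iterate_cycleNext_eq_Cmat hA hE ha]
  · rfl
  · by_contra hij
    have hedge : Arc A (e (.inr i)) (e (.inl j)) := Ne.symm hij
    rw [hea, heb] at hedge
    exact hba (((hb.sameComponent_iterate i).1.tail hedge).trans (ha.sameComponent_iterate j).2)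
  · simp [heb, apply_iterate_cycleNext_eq_Cmat hA hE hb]

theorem exists_reindex_of_cycleLink [Fintype α] {a b : α} (hA : IsZO A)
    (hE : DisjointCycles (Arc A)) (h : CycleLink (Arc A) 1 a b)
    (hcop : (cycleLength (Arc A) a).Coprime (cycleLength (Arc A) b))
    (hcard : cycleLength (Arc A) a + cycleLength (Arc A) b = Fintype.card α)
    (hfork : ∀ k, Fork (Arc A) k → cycleLength (Arc A) a * cycleLength (Arc A) b ≤ k) :
    ∃ X : Matrix (Fin (cycleLength (Arc A) a)) (Fin (cycleLength (Arc A) b)) ℕ,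
      IsZO X ∧ (∃! ij : Fin _ × Fin _, X ij.1 ij.2 ≠ 0) ∧
      ∃ e : Fin _ ⊕ Fin _ ≃ α, A = reindex e e (fromBlocks (Cmat _) X 0 (Cmat _)) := by
  obtain ⟨ha, hb, ⟨v, hab, hvb⟩, hba⟩ := h
  obtain rfl : b = v := hvb.symm
  obtain ⟨e, hea, heb⟩ := exists_equiv_of_cycleLength_add_eq_card ha hb hba hcard
  refine ⟨of fun i j => A (e (.inl i)) (e (.inr j)), fun i j => hA _ _,
    ⟨(⟨0, hE.cycleLength_pos ha⟩, ⟨0, hE.cycleLength_pos hb⟩), ?_, ?_⟩,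
    e, (reindex_fromBlocks_Cmat_eq hA hE ha hb hba e hea heb).symm⟩
  · simpa [hea, heb, Arc] using hab
  · rintro ⟨i, j⟩ hij
    simp only [of_apply, hea, heb] at hij
    by_contra hne
    have hne' : (i : ℕ) ≠ 0 ∨ (j : ℕ) ≠ 0 := by
      simpa [Prod.ext_iff, Fin.ext_iff, imp_iff_not_or] using hne
    obtain ⟨k, hk, hk'⟩ := exists_fork_of_two_edges ha hb hba hab hcop hij i.2 j.2 hne'
    exact hk.not_ge (hfork k hk')

end Circulant

theorem exists_cycleLink_of_isLeast_fork {V : Type*} [Fintype V] {E : V → V → Prop}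
    (hn : 7 ≤ Fintype.card V) (hn10 : Fintype.card V ≠ 10) (hE : DisjointCycles E)
    (h : IsLeast {k | Fork E k} (g (Fintype.card V))) :
    ∃ a b, CycleLink E 1 a b ∧ StarCond (Fintype.card V) (cycleLength E a) (cycleLength E b) := by
  have hsep : ¬ CyclesSeparated E := fun hsep => by
    obtain ⟨j, hj, hfork⟩ := hsep.exists_fork_lt hE h.1 (lt_g hn).le
      fun p q r hp hq hr hsum => (lcm_add_lt_g hn hn10 hp hq hr hsum).le
    exact hj.not_ge (h.2 hfork)
  obtain ⟨l, a, b, hlink, hmin⟩ := exists_shortest_cycleLink hsep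
  obtain ⟨rfl, hstar⟩ := starCond_of_g_le hn hn10 (hE.cycleLength_pos hlink.recurrent_left)
    (hE.cycleLength_pos hlink.recurrent_right) (hlink.card_le hmin) (h.2 (hlink.fork hE hmin))
  exact ⟨a, b, hlink, hstar⟩

theorem stmt_1_general {α : Type*} [Fintype α] [DecidableEq α] (hn : 7 ≤ Fintype.card α)
    (hn10 : Fintype.card α ≠ 10) (A : Matrix α α ℕ) (hA : IsZO A) :
    theta A = (g (Fintype.card α) : ℕ∞) ↔
      ∃ (p q : ℕ) (X : Matrix (Fin p) (Fin q) ℕ),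
        StarCond (Fintype.card α) p q ∧ IsZO X ∧
        (∃! ij : Fin p × Fin q, X ij.1 ij.2 ≠ 0) ∧
        ∃ e : (Fin p ⊕ Fin q) ≃ α,
          A = Matrix.reindex e e (Matrix.fromBlocks (Cmat p) X 0 (Cmat q)) := by
  constructor
  · intro h
    rw [theta_eq_iff_isLeast_fork hA] at h
    have hE : DisjointCycles (Arc A) := disjointCycles_of_forall_not_fork fun k hk hfork =>
      (hk.trans_lt (lt_g hn)).not_ge (h.2 hfork)
    obtain ⟨a, b, hlink, hstar⟩ := exists_cycleLink_of_isLeast_fork hn hn10 hE h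
    obtain ⟨X, hX⟩ := exists_reindex_of_cycleLink hA hE hlink hstar.coprime hstar.1
      fun k hk => hstar.mul_eq ▸ h.2 hk
    exact ⟨_, _, X, hstar, hX⟩
  · rintro ⟨p, q, X, hstar, -, hX, e, rfl⟩
    have hB : IsZO (Matrix.fromBlocks (Cmat p) X 0 (Cmat q)) := fun i j => by
      simpa using hA (e i) (e j)
    rw [theta_reindex, theta_eq_iff_isLeast_fork hB, ← hstar.mul_eq]
    exact isLeast_fork_fromBlocks_Cmat hstar.coprime hX

theorem stmt_1 (n : ℕ) (hn : 7 ≤ n) (hn10 : n ≠ 10)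
    (A : Matrix (Fin n) (Fin n) ℕ) (hA : IsZO A) (hfin : theta A ≠ ⊤) :
    theta A = (g n : ℕ∞) ↔
      ∃ (p q : ℕ) (X : Matrix (Fin p) (Fin q) ℕ),
        StarCond n p q ∧ IsZO X ∧ (∃! ij : Fin p × Fin q, X ij.1 ij.2 ≠ 0) ∧
        ∃ e : (Fin p ⊕ Fin q) ≃ Fin n,
          A = Matrix.reindex e e (Matrix.fromBlocks (Cmat p) X 0 (Cmat q)) := by
  simpa only [Fintype.card_fin] using
    stmt_1_general (by simpa using hn) (by simpa using hn10) A hA
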